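/- Let I, C : ℕ → ℝ be a Gregory pair, i.e. 0 < I 0 < C 0, I (n+1) = Real.sqrt (C n * I n), C (n+1) = 2 * C n * I (n+1) / (C n + I (n+1)). Then the hyperreal difference Hyperreal.ofSeq C - Hyperreal.ofSeq I is infinitesimal; that is, in the hyperreal framework the 'ultimate terms' of the two sequences are infinitely close (Gregory's relation I ≈ C at infinite index). -/

import Mathlib

/-!
One step of the recursion sends `(i, c)` with `0 < i < c` to `(j, 2cj/(c+j))`, where `j = √(ci)`
satisfies `i < j < c`. The new gap is `2cj/(c+j) - j = j(c-j)/(c+j)`; it is positive, and at most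
`(c-i)/2` because `j/(c+j) ≤ 1/2` and `c - j ≤ c - i` (`gregory_step`). Hence the gaps are bounded
by a geometric sequence of ratio `1/2` and tend to `0`, and a real sequence tending to `0`
represents an infinitesimal hyperreal.
-/

/-- A Gregory step keeps both terms positive and in order and at least halves their gap. -/
theorem gregory_step {i c : ℝ} (hi : 0 < i) (hic : i < c) :
    0 < √(c * i) ∧ √(c * i) < 2 * c * √(c * i) / (c + √(c * i)) ∧
      2 * c * √(c * i) / (c + √(c * i)) - √(c * i) ≤ (c - i) / 2 := by
  have hc : 0 < c := hi.trans hic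
  have hpos : 0 < √(c * i) := Real.sqrt_pos.2 (mul_pos hc hi)
  have hij : i < √(c * i) := Real.lt_sqrt_of_sq_lt (by nlinarith)
  have hjc : √(c * i) < c := (Real.sqrt_lt' hc).2 (by nlinarith)
  generalize √(c * i) = j at *
  have hs : 0 < c + j := by positivity
  refine ⟨hpos, ?_, ?_⟩
  · rw [lt_div_iff₀ hs]
    nlinarith
  · rw [sub_le_iff_le_add, div_le_iff₀ hs]
    -- The right side minus the left is `((c - j)² + (j - i)(c + j)) / 2`.
    nlinarith [sq_nonneg (c - j), mul_pos (sub_pos.2 hij) hs]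

theorem gregory_pair_hyperreal_infinitesimal
    (I C : ℕ → ℝ)
    (h0 : 0 < I 0) (h1 : I 0 < C 0)
    (hI : ∀ n, I (n + 1) = Real.sqrt (C n * I n))
    (hC : ∀ n, C (n + 1) = 2 * C n * I (n + 1) / (C n + I (n + 1))) :
    Hyperreal.Infinitesimal (Hyperreal.ofSeq C - Hyperreal.ofSeq I) := by
  have key : ∀ n, 0 < I n ∧ I n < C n ∧ C n - I n ≤ (C 0 - I 0) * (1 / 2) ^ n := by
    intro n
    induction n with
    | zero => exact ⟨h0, h1, by simp⟩
    | succ n ih =>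
      obtain ⟨hpos, hlt, hgap⟩ := ih
      obtain ⟨a, b, c⟩ := gregory_step hpos hlt
      rw [hC, hI]
      refine ⟨a, b, c.trans ?_⟩
      rw [pow_succ]
      linarith
  have hgeom : Filter.Tendsto (fun n : ℕ => (C 0 - I 0) * (1 / 2 : ℝ) ^ n) Filter.atTop
      (nhds 0) := by
    simpa using (tendsto_pow_atTop_nhds_zero_of_lt_one (r := (1 / 2 : ℝ))
      (by norm_num) (by norm_num)).const_mul (C 0 - I 0)
  have hlim : Filter.Tendsto (C - I) Filter.atTop (nhds 0) :=
    squeeze_zero (fun n => sub_nonneg.2 (key n).2.1.le) (fun n => (key n).2.2) hgeom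
  -- Subtraction of germs is computed pointwise, so the difference is `ofSeq (C - I)` by definition.
  exact Hyperreal.isSt_of_tendsto hlim
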